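/- Let n ≥ 2, let M be a closed connected topological n-manifold, and let f : M → M be a regular homeomorphism such that no point of its chain recurrent set has Morse index 1 or n−1. Then M is simply connected. -/

import Mathlib

open Filter Topology

/-- `M` is a topological `n`-manifold without boundary: every point has an open
neighbourhood homeomorphic to `ℝⁿ`. -/
def IsChartedEuclidean (n : ℕ) (M : Type*) [TopologicalSpace M] : Prop :=
  ∀ x : M, ∃ U : Set M, IsOpen U ∧ x ∈ U ∧ Nonempty (U ≃ₜ EuclideanSpace ℝ (Fin n))

/-- An `ε`-chain of the map `f` from `x` to `y`. -/
def IsEpsChain {M : Type*} [PseudoMetricSpace M] (f : M → M) (ε : ℝ) (x y : M) : Prop :=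
  ∃ k : ℕ, 0 < k ∧ ∃ (c : Fin (k + 1) → M) (m : Fin k → ℕ),
    c 0 = x ∧ c (Fin.last k) = y ∧ (∀ i, 1 ≤ m i) ∧
    ∀ i : Fin k, dist (f^[m i] (c i.castSucc)) (c i.succ) < ε

/-- A point is chain recurrent for `f` if for every `ε > 0` there is an `ε`-chain
from the point to itself. -/
def ChainRecurrent {M : Type*} [PseudoMetricSpace M] (f : M → M) (x : M) : Prop :=
  ∀ ε : ℝ, 0 < ε → IsEpsChain f ε x x

/-- The chain recurrent set of `f`. -/
def chainRecurrentSet {M : Type*} [PseudoMetricSpace M] (f : M → M) : Set M :=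
  {x | ChainRecurrent f x}

/-- The canonical hyperbolic model map `a_{i,δu,δs} : ℝⁿ → ℝⁿ`,
`a(x₁,…,xₙ) = (2δu·x₁, 2x₂, …, 2x_i, (δs/2)·x_{i+1}, x_{i+2}/2, …, xₙ/2)`. -/
noncomputable def modelMap (n i : ℕ) (δu δs : ℝ) :
    EuclideanSpace ℝ (Fin n) → EuclideanSpace ℝ (Fin n) :=
  fun x => WithLp.toLp 2 fun j =>
    if (j : ℕ) < i then (if (j : ℕ) = 0 then 2 * δu else 2) * x j
    else (if (j : ℕ) = i then δs / 2 else 1 / 2) * x j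

/-- A point `p` is a topologically hyperbolic periodic point of the homeomorphism `f`
with Morse index `i`: `p` is periodic of some least period `m` and `f^m` is conjugate,
in a neighbourhood of `p`, to the model map `a_{i,δu,δs}` on `ℝⁿ`. -/
def TopHyperbolic {M : Type*} [MetricSpace M] (n : ℕ) (f : M ≃ₜ M) (p : M) (i : ℕ) : Prop :=
  ∃ m : ℕ, 0 < m ∧ Function.IsPeriodicPt (⇑f) m p ∧ Function.minimalPeriod (⇑f) p = m ∧
    ∃ δu δs : ℝ, (δu = 1 ∨ δu = -1) ∧ (δs = 1 ∨ δs = -1) ∧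
      ∃ (U : Set M) (_ : IsOpen U) (_ : p ∈ U) (h : U ≃ₜ EuclideanSpace ℝ (Fin n)),
        ∀ x : U, (⇑f)^[m] (x : M) = ((h.symm (modelMap n i δu δs (h x)) : U) : M)

/-- A homeomorphism is regular if its chain recurrent set is finite and consists of
topologically hyperbolic periodic points (of some Morse index `i ∈ {0,…,n}`). -/
def RegularHomeo {M : Type*} [MetricSpace M] (n : ℕ) (f : M ≃ₜ M) : Prop :=
  (chainRecurrentSet (⇑f)).Finite ∧
    ∀ p ∈ chainRecurrentSet (⇑f), ∃ i ≤ n, TopHyperbolic n f p i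

/-- The stable manifold `W^s_p = {q : f^{km}(q) → p, k → +∞}`, `m` the least period. -/
def stableSet {M : Type*} [MetricSpace M] (f : M ≃ₜ M) (p : M) : Set M :=
  {q | Tendsto (fun k : ℕ => (⇑f)^[k * Function.minimalPeriod (⇑f) p] q) atTop (𝓝 p)}

/-- The unstable manifold `W^u_p = {q : f^{-km}(q) → p, k → +∞}`, `m` the least period. -/
def unstableSet {M : Type*} [MetricSpace M] (f : M ≃ₜ M) (p : M) : Set M :=
  {q | Tendsto (fun k : ℕ => (⇑f.symm)^[k * Function.minimalPeriod (⇑f) p] q) atTop (𝓝 p)}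

/-- A saddle periodic point: topologically hyperbolic of Morse index `0 < i < n`. -/
def IsSaddlePt {M : Type*} [MetricSpace M] (n : ℕ) (f : M ≃ₜ M) (p : M) : Prop :=
  ∃ i, 0 < i ∧ i < n ∧ TopHyperbolic n f p i

/-- A subset `S ⊆ M` is a locally flat `k`-dimensional submanifold of the `n`-manifold
`M`: every `x ∈ S` has an open neighbourhood `U` and a homeomorphism `ψ : U ≃ₜ ℝⁿ` with
`ψ(U ∩ S) = ℝᵏ × {0}`. -/
def IsLocallyFlatSubmanifold (n k : ℕ) {M : Type*} [TopologicalSpace M] (S : Set M) : Prop :=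
  ∀ x ∈ S, ∃ U : Set M, IsOpen U ∧ x ∈ U ∧
    ∃ ψ : U ≃ₜ EuclideanSpace ℝ (Fin n),
      ψ '' {y : U | (y : M) ∈ S} = {y | ∀ j : Fin n, k ≤ (j : ℕ) → y j = 0}

/-!
Every orbit converges to a periodic orbit, so `M` is covered by the finitely many stable sets
`W^s_p`. Those of the sinks are disjoint open cells; all others are copies of linear subspaces of
codimension at least `2`, so by the Baire category theorem a generic path of `M` avoids them. Any
path can therefore be perturbed into the union `B` of the cells. Hence `B` is connected, which
makes it a single cell, and it meets every small ball in a path connected set.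

A van Kampen type argument concludes. Fix `b ∈ B`. Going from `b` to `x` first inside `B` and then
inside a small ball around `x` gives a homotopy class that does not depend on the choices, since
`B` and the ball are simply connected with path connected intersection. Continuing such a path
through a second small ball gives again such a class, so every path from `b` belongs to it.
-/

section VanKampen

open Set Path

variable {X : Type*} [TopologicalSpace X]

theorem homotopic_of_range_subset {s : Set X} (hs : IsSimplyConnected s) {x y : X}
    {p q : Path x y} (hp : range p ⊆ s) (hq : range q ⊆ s) : p.Homotopic q := by
  have := hs.simplyConnectedSpace
  let lift (r : Path x y) (hr : range r ⊆ s) :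
      Path (⟨x, hr ⟨0, r.source⟩⟩ : s) ⟨y, hr ⟨1, r.target⟩⟩ :=
    { toFun t := ⟨r t, hr ⟨t, rfl⟩⟩
      source' := by simp
      target' := by simp }
  exact (SimplyConnectedSpace.paths_homotopic (lift p hp) (lift q hq)).map
    ⟨Subtype.val, continuous_subtype_val⟩

theorem homotopyClass_induction {ι : Type*} {U : ι → Set X} (hU : ∀ i, IsOpen (U i))
    (hcover : ⋃ i, U i = univ) {P : ∀ ⦃x y : X⦄, Homotopic.Quotient x y → Prop}
    (of_subset : ∀ i ⦃x y⦄ (γ : Path x y), range γ ⊆ U i → P (.mk γ))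
    (trans : ∀ ⦃x y z⦄ (c : Homotopic.Quotient x y) (d : Homotopic.Quotient y z),
      P c → P d → P (c.trans d))
    {x y : X} (γ : Path x y) : P (.mk γ) := by
  have of_cast : ∀ {x y x' y' : X} (hx : x' = x) (hy : y' = y)
      (c : Homotopic.Quotient x y), P (c.cast hx hy) → P c := by
    rintro x y _ _ rfl rfl c hc
    simpa only [Homotopic.Quotient.cast_rfl_rfl] using hc
  obtain ⟨t, ht₀, ht, ⟨N, hN⟩, htU⟩ := exists_monotone_Icc_subset_open_cover_unitInterval
    (c := fun i => γ ⁻¹' U i) (fun i => (hU i).preimage γ.continuous)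
    (by rw [← preimage_iUnion, hcover, preimage_univ])
  have initial (k : ℕ) : P (.mk (γ.subpath 0 (t k))) := by
    induction k with
    | zero =>
      obtain ⟨i, hi⟩ := htU 0
      rw [ht₀, Path.subpath_self]
      refine of_subset i _ ?_
      rw [Path.refl_range, singleton_subset_iff, ← ht₀]
      exact hi (left_mem_Icc.2 (ht (Nat.zero_le 1)))
    | succ k ih =>
      obtain ⟨i, hi⟩ := htU k
      rw [← Homotopic.Quotient.eq.2 ⟨Path.Homotopy.subpathTransSubpath γ 0 (t k) (t (k + 1))⟩,
        Homotopic.Quotient.mk_trans]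
      refine trans _ _ ih (of_subset i _ ?_)
      rw [Path.range_subpath_of_le _ _ _ (ht k.le_succ)]
      exact image_subset_iff.2 hi
  have whole := initial N
  rw [hN N le_rfl, Path.subpath_zero_one] at whole
  exact of_cast γ.source γ.target _ whole

/-- The open sets used in the van Kampen argument: any two ways of entering `V` from inside `B`
can be compared along a path in `V ∩ B`. -/
structure IsAdapted (B V : Set X) : Prop where
  isOpen : IsOpen V
  isSimplyConnected : IsSimplyConnected V
  isPathConnected_inter : IsPathConnected (V ∩ B)

/-- The homotopy classes of paths which run inside `B` first and then inside an open set adapted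
to `B`. When `B` is simply connected there is exactly one from `b ∈ B` to each point `x`. -/
def IsCanonicalClass (B : Set X) {b x : X} (c : Homotopic.Quotient b x) : Prop :=
  ∃ V, IsAdapted B V ∧ ∃ (y : X) (p : Path b y) (q : Path y x),
    range p ⊆ B ∧ range q ⊆ V ∧ c = (Homotopic.Quotient.mk p).trans (.mk q)

variable {B V : Set X} {b x y : X}

theorem IsAdapted.exists_path_trans (hV : IsAdapted B V) (hB : IsPathConnected B) (hb : b ∈ B)
    (hx : x ∈ V) :
    ∃ (y : X) (p : Path b y) (q : Path y x), range p ⊆ B ∧ range q ⊆ V := by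
  obtain ⟨y, hyV, hyB⟩ := hV.isPathConnected_inter.nonempty
  obtain ⟨p, hp⟩ := hB.joinedIn b hb y hyB
  obtain ⟨q, hq⟩ := hV.isSimplyConnected.isPathConnected.joinedIn y hyV x hx
  exact ⟨y, p, q, range_subset_iff.2 hp, range_subset_iff.2 hq⟩

theorem IsAdapted.trans_eq_trans (hV : IsAdapted B V) (hB : IsSimplyConnected B) {y' : X}
    {p : Path b y} {q : Path y x} {p' : Path b y'} {q' : Path y' x} (hp : range p ⊆ B)
    (hq : range q ⊆ V) (hp' : range p' ⊆ B) (hq' : range q' ⊆ V) :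
    (Homotopic.Quotient.mk p).trans (.mk q) = (Homotopic.Quotient.mk p').trans (.mk q') := by
  obtain ⟨r, hr⟩ := hV.isPathConnected_inter.joinedIn y ⟨hq ⟨0, q.source⟩, hp ⟨1, p.target⟩⟩
    y' ⟨hq' ⟨0, q'.source⟩, hp' ⟨1, p'.target⟩⟩
  have inside_B : (Homotopic.Quotient.mk p).trans (.mk r) = .mk p' :=
    Homotopic.Quotient.eq.2 <| homotopic_of_range_subset hB
      (by simpa only [Path.trans_range] using
        union_subset hp (range_subset_iff.2 fun t => (hr t).2)) hp'
  have inside_V : (Homotopic.Quotient.mk r).trans (.mk q') = .mk q :=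
    Homotopic.Quotient.eq.2 <| homotopic_of_range_subset hV.isSimplyConnected
      (by simpa only [Path.trans_range] using
        union_subset (range_subset_iff.2 fun t => (hr t).1) hq') hq
  rw [← inside_V, ← Homotopic.Quotient.trans_assoc, inside_B]

theorem IsCanonicalClass.eq (hB : IsSimplyConnected B)
    (hbasis : TopologicalSpace.IsTopologicalBasis {V | IsAdapted B V})
    {c c' : Homotopic.Quotient b x} (hc : IsCanonicalClass B c)
    (hc' : IsCanonicalClass B c') : c = c' := by
  obtain ⟨V, hV, y, p, q, hp, hq, rfl⟩ := hc
  obtain ⟨V', hV', y', p', q', hp', hq', rfl⟩ := hc'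
  obtain ⟨W, hW, hxW, hWV⟩ := hbasis.exists_subset_of_mem_open
    (show x ∈ V ∩ V' from ⟨hq ⟨1, q.target⟩, hq' ⟨1, q'.target⟩⟩) (hV.isOpen.inter hV'.isOpen)
  obtain ⟨z, r, s, hr, hs⟩ :=
    hW.exists_path_trans hB.isPathConnected (hp ⟨0, p.source⟩) hxW
  have hsV : range s ⊆ V ∩ V' := hs.trans hWV
  exact (hV.trans_eq_trans hB hp hq hr fun _ h => (hsV h).1).trans
    (hV'.trans_eq_trans hB hr (fun _ h => (hsV h).2) hp' hq')

theorem IsCanonicalClass.trans (hB : IsSimplyConnected B)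
    (hbasis : TopologicalSpace.IsTopologicalBasis {V | IsAdapted B V}) (hV : IsAdapted B V)
    {c : Homotopic.Quotient b x} (hc : IsCanonicalClass B c) {γ : Path x y}
    (hγ : range γ ⊆ V) : IsCanonicalClass B (c.trans (.mk γ)) := by
  have hb : b ∈ B := by
    obtain ⟨_, _, _, p, _, hp, _⟩ := hc
    exact hp ⟨0, p.source⟩
  obtain ⟨z, p, q, hp, hq⟩ :=
    hV.exists_path_trans hB.isPathConnected hb (hγ ⟨0, γ.source⟩)
  refine ⟨V, hV, z, p, q.trans γ, hp, ?_, ?_⟩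
  · rw [Path.trans_range]
    exact union_subset hq hγ
  · rw [hc.eq hB hbasis ⟨V, hV, z, p, q, hp, hq, rfl⟩, Homotopic.Quotient.trans_assoc,
      Homotopic.Quotient.mk_trans]

theorem simplyConnectedSpace_of_isTopologicalBasis_isAdapted (hB : IsSimplyConnected B)
    (hbasis : TopologicalSpace.IsTopologicalBasis {V | IsAdapted B V}) :
    SimplyConnectedSpace X := by
  obtain ⟨b, hb⟩ := hB.nonempty
  have exists_canonical (x : X) : ∃ c : Homotopic.Quotient b x, IsCanonicalClass B c := by
    obtain ⟨V, hV, hx, -⟩ := hbasis.exists_subset_of_mem_open (mem_univ x) isOpen_univ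
    obtain ⟨y, p, q, hp, hq⟩ := hV.exists_path_trans hB.isPathConnected hb hx
    exact ⟨_, V, hV, y, p, q, hp, hq, rfl⟩
  have trans_path {x y : X} (γ : Path x y) : ∀ c : Homotopic.Quotient b x,
      IsCanonicalClass B c → IsCanonicalClass B (c.trans (.mk γ)) := by
    refine homotopyClass_induction (U := fun V : {V | IsAdapted B V} => (V : Set X))
      (P := fun x y d => ∀ c : Homotopic.Quotient b x, IsCanonicalClass B c →
        IsCanonicalClass B (c.trans d)) (fun V => V.2.isOpen)
      (by rw [← sUnion_eq_iUnion, hbasis.sUnion_eq]) ?_ ?_ γ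
    · exact fun V _ _ γ hγ c hc => hc.trans hB hbasis V.2 hγ
    · intro x y z d d' hd hd' c hc
      rw [← Homotopic.Quotient.trans_assoc]
      exact hd' _ (hd c hc)
  choose c hc using exists_canonical
  rw [simply_connected_iff_paths_homotopic']
  refine ⟨⟨⟨b⟩, fun x y => ?_⟩, fun {x y} γ γ' => Homotopic.Quotient.eq.1 ?_⟩
  · exact ⟨((c x).symm.trans (c y)).out⟩
  · have eq_symm_trans (δ : Path x y) : Homotopic.Quotient.mk δ = (c x).symm.trans (c y) := by
      rw [← (trans_path δ (c x) (hc x)).eq hB hbasis (hc y), ← Homotopic.Quotient.trans_assoc]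
      simp only [Homotopic.Quotient.symm_trans, Homotopic.Quotient.refl_trans]
    rw [eq_symm_trans γ, eq_symm_trans γ']

end VanKampen

section Avoidance

open Set Module
open scoped unitInterval

theorem continuous_extend_of_isOpenEmbedding {X Y Z : Type*} [TopologicalSpace X]
    [TopologicalSpace Y] [TopologicalSpace Z] {j : Y → X} (hj : IsOpenEmbedding j) {C : Set X}
    (hC : IsClosed C) (hCj : C ⊆ range j) {g : Y → Z} {g₀ : X → Z} (hg : Continuous g)
    (hg₀ : Continuous g₀) (heq : ∀ y, j y ∉ C → g y = g₀ (j y)) :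
    Continuous (Function.extend j g g₀) := by
  rw [continuous_iff_continuousAt]
  intro x
  by_cases hx : x ∈ C
  · obtain ⟨y, rfl⟩ := hCj hx
    rw [← hj.continuousAt_iff, Function.extend_comp hj.injective]
    exact hg.continuousAt
  · refine hg₀.continuousAt.congr ?_
    filter_upwards [hC.isOpen_compl.mem_nhds hx] with z hz
    by_cases hzj : ∃ y, j y = z
    · obtain ⟨y, rfl⟩ := hzj
      rw [hj.injective.extend_apply, heq y hz]
    · rw [Function.extend_apply' _ _ _ hzj]

theorem dense_setOf_forall_ne_zero {F : Type*} [NormedAddCommGroup F] [NormedSpace ℝ F]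
    [FiniteDimensional ℝ F] (hF : 2 ≤ finrank ℝ F) : Dense {G : C(I, F) | ∀ t, G t ≠ 0} := by
  rw [Metric.dense_iff]
  intro g δ hδ
  obtain ⟨G, hG, hGg, -⟩ := (g.continuous.Icc_extend' (h := zero_le_one)).exists_contDiff_approx 1
    continuous_const fun _ => half_pos hδ
  obtain ⟨v, hv, hvδ⟩ := (hG.dense_compl_range_of_finrank_lt_finrank
    (by rw [finrank_self]; lia)).exists_dist_lt (0 : F) (half_pos hδ)
  refine ⟨⟨fun t => G t - v, by have := hG.continuous; fun_prop⟩, ?_, fun t ht => ?_⟩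
  · rw [Metric.mem_ball, ContinuousMap.dist_lt_iff hδ]
    intro t
    have h₁ : dist (G t) (g t) < δ / 2 := by simpa using hGg t
    have h₂ : dist (G t - v) (G t) < δ / 2 := by
      rwa [dist_self_sub_left, ← dist_zero_left]
    calc dist (G t - v) (g t) ≤ dist (G t - v) (G t) + dist (G t) (g t) := dist_triangle ..
      _ < δ := by linarith
  · exact hv ⟨t, sub_eq_zero.1 ht⟩

variable {M E F : Type*} [TopologicalSpace M] [NormedAddCommGroup E] [NormedSpace ℝ E]
  [NormedAddCommGroup F] [NormedSpace ℝ F] {e : E → M}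

/-- The displacement of `M` supported in the chart `e` which moves `e v` along the translation
vector `s w`, cut off by `ψ`. -/
noncomputable def chartTranslation (e : E → M) (ψ : C(E, ℝ)) (s : F →L[ℝ] E) : F × M → M :=
  Function.extend (Prod.map id e) (fun a => e (a.2 + ψ a.2 • s a.1)) Prod.snd

/-- The map `π`, read in the chart `e` and cut off by `ψ`. -/
noncomputable def chartCutoff (e : E → M) (ψ : C(E, ℝ)) (π : E →L[ℝ] F) : M → F :=
  Function.extend e (fun v => ψ v • π v) 0

variable {ψ : C(E, ℝ)}

theorem chartTranslation_apply (he : IsOpenEmbedding e) (s : F →L[ℝ] E) (w : F) (v : E) :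
    chartTranslation e ψ s (w, e v) = e (v + ψ v • s w) :=
  (Function.injective_id.prodMap he.injective).extend_apply _ _ (w, v)

theorem chartTranslation_zero (he : IsOpenEmbedding e) (s : F →L[ℝ] E) (z : M) :
    chartTranslation e ψ s (0, z) = z := by
  by_cases hz : ∃ v, e v = z
  · obtain ⟨v, rfl⟩ := hz
    rw [chartTranslation_apply he, map_zero, smul_zero, add_zero]
  · exact Function.extend_apply' _ _ _ fun ⟨a, ha⟩ => hz ⟨a.2, congrArg Prod.snd ha⟩

theorem continuous_chartTranslation [T2Space M] (he : IsOpenEmbedding e) (hψ : HasCompactSupport ψ)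
    (s : F →L[ℝ] E) : Continuous (chartTranslation e ψ s) := by
  have hK : IsClosed (e '' tsupport ψ) := (hψ.isCompact.image he.continuous).isClosed
  refine continuous_extend_of_isOpenEmbedding (IsOpenEmbedding.id.prodMap he)
    (hK.preimage continuous_snd) ?_ ?_ continuous_snd ?_
  · rintro ⟨w, _⟩ ⟨v, -, rfl⟩
    exact ⟨(w, v), rfl⟩
  · exact he.continuous.comp (by fun_prop)
  · rintro ⟨w, v⟩ hv
    have : ψ v = 0 := image_eq_zero_of_notMem_tsupport fun h => hv ⟨v, h, rfl⟩
    simp [this]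

theorem chartCutoff_apply (he : IsOpenEmbedding e) (π : E →L[ℝ] F) (v : E) :
    chartCutoff e ψ π (e v) = ψ v • π v :=
  he.injective.extend_apply _ _ v

theorem continuous_chartCutoff [T2Space M] (he : IsOpenEmbedding e) (hψ : HasCompactSupport ψ)
    (π : E →L[ℝ] F) : Continuous (chartCutoff e ψ π) := by
  refine continuous_extend_of_isOpenEmbedding he
    (hψ.isCompact.image he.continuous).isClosed (image_subset_range _ _) (by fun_prop)
    continuous_const fun v hv => ?_
  have : ψ v = 0 := image_eq_zero_of_notMem_tsupport fun h => hv ⟨v, h, rfl⟩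
  simp [this]

variable [T2Space M] [FiniteDimensional ℝ E] [FiniteDimensional ℝ F] {π : E →L[ℝ] F}

theorem exists_continuous_push {T : Type*} [TopologicalSpace T] [LocallyCompactSpace T]
    (he : IsOpenEmbedding e) (hπ : Function.Surjective π) {K : Set E} (hK : IsCompact K)
    (γ : C(T, M)) :
    ∃ (height : C(T, F)) (push : C(T, F) → C(T, M)), Continuous push ∧ push height = γ ∧
      ∀ G t, γ t ∈ e '' K → ∃ v, push G t = e v ∧ π v = G t := by
  obtain ⟨s, hs⟩ := π.exists_rightInverse_of_surjective (LinearMap.range_eq_top.2 hπ)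
  obtain ⟨ψ, hψK, -, hψ, -⟩ := exists_continuous_one_zero_of_isCompact hK isClosed_empty
    (disjoint_empty K)
  have hT := continuous_chartTranslation he hψ s
  let height : C(T, F) := ⟨fun t => chartCutoff e ψ π (γ t),
    (continuous_chartCutoff he hψ π).comp γ.continuous⟩
  let push (G : C(T, F)) : C(T, M) :=
    ⟨fun t => chartTranslation e ψ s (G t - height t, γ t), hT.comp (by fun_prop)⟩
  refine ⟨height, push, ContinuousMap.continuous_of_continuous_uncurry push <|
    hT.comp (by fun_prop), ?_, ?_⟩
  · ext t
    simp [push, chartTranslation_zero he]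
  · rintro G t ⟨v, hv, hvt⟩
    have hψv : ψ v = 1 := hψK hv
    have height_eq : height t = π v := by simp [height, ← hvt, chartCutoff_apply he, hψv]
    refine ⟨v + s (G t - π v), ?_, ?_⟩
    · simp [push, ← hvt, height_eq, chartTranslation_apply he, hψv]
    · have right_inverse (w : F) : π (s w) = w := DFunLike.congr_fun hs w
      rw [map_add, right_inverse, add_sub_cancel]

theorem dense_setOf_range_subset_compl_image (he : IsOpenEmbedding e)
    (hπ : Function.Surjective π) (hF : 2 ≤ finrank ℝ F) {C : Set E} (hC : IsCompact C)
    (hCπ : C ⊆ π.ker) : Dense {γ : C(I, M) | range γ ⊆ (e '' C)ᶜ} := by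
  obtain ⟨K, hK, hCK⟩ := exists_compact_superset hC
  rw [dense_iff_inter_open]
  rintro O hO ⟨γ, hγ⟩
  obtain ⟨height, push, push_continuous, push_height, push_mem⟩ :=
    exists_continuous_push he hπ hK γ
  let far : Set I := γ ⁻¹' (e '' interior K)ᶜ
  have hfar : IsCompact far :=
    ((he.isOpenMap _ isOpen_interior).isClosed_compl.preimage γ.continuous).isCompact
  have hO' : IsOpen (O ∩ {γ' | MapsTo γ' far (e '' C)ᶜ}) :=
    hO.inter <| ContinuousMap.isOpen_setOfPred_mapsTo hfar
      (hC.image he.continuous).isClosed.isOpen_compl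
  have hγO' : γ ∈ O ∩ {γ' | MapsTo γ' far (e '' C)ᶜ} :=
    ⟨hγ, fun _ ht => mt (image_mono hCK ·) ht⟩
  obtain ⟨G, ⟨hGO, hGfar⟩, hG⟩ := (dense_setOf_forall_ne_zero hF).inter_open_nonempty _
    (hO'.preimage push_continuous) ⟨height, by rwa [mem_preimage, push_height]⟩
  refine ⟨push G, hGO, range_subset_iff.2 fun t => ?_⟩
  by_cases ht : t ∈ far
  · exact hGfar ht
  · obtain ⟨v, hv, hvG⟩ := push_mem G t (image_mono interior_subset (not_notMem.1 ht))
    rw [hv, mem_compl_iff, he.injective.mem_set_image]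
    exact fun hvC => hG t (hvG.symm.trans (hCπ hvC))

theorem eventually_residual_range_subset_compl_image_ker (he : IsOpenEmbedding e)
    (hπ : Function.Surjective π) (hF : 2 ≤ finrank ℝ F) :
    ∀ᶠ γ : C(I, M) in residual _, range γ ⊆ (e '' π.ker)ᶜ := by
  let C (k : ℕ) : Set E := π.ker ∩ Metric.closedBall 0 k
  have hC (k : ℕ) : IsCompact (C k) := (isCompact_closedBall 0 _).inter_left π.isClosed_ker
  have avoids (k : ℕ) : ∀ᶠ γ : C(I, M) in residual _, range γ ⊆ (e '' C k)ᶜ :=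
    residual_of_dense_open
      (ContinuousMap.isOpen_setOfPred_range_subset
        ((hC k).image he.continuous).isClosed.isOpen_compl)
      (dense_setOf_range_subset_compl_image he hπ hF (hC k) inter_subset_left)
  filter_upwards [eventually_countable_forall.2 avoids] with γ hγ
  rintro z hz ⟨v, hv, rfl⟩
  obtain ⟨k, hk⟩ := exists_nat_ge ‖v‖
  exact hγ k hz ⟨v, ⟨hv, mem_closedBall_zero_iff.2 hk⟩, rfl⟩

end Avoidance

section PathConnected

open Set
open scoped unitInterval

theorem isPathConnected_inter_of_dense_setOf_range_subset {M : Type*} [TopologicalSpace M]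
    [LocallyPathConnectedSpace M] {B V : Set M} (hB : IsOpen B)
    (hdense : Dense {γ : C(I, M) | range γ ⊆ B}) (hV : IsOpen V) (hVp : IsPathConnected V) :
    IsPathConnected (V ∩ B) := by
  have hopen : IsOpen {γ : C(I, M) | range γ ⊆ V} :=
    ContinuousMap.isOpen_setOfPred_range_subset hV
  rw [isPathConnected_iff]
  constructor
  · obtain ⟨x, hx⟩ := hVp.nonempty
    obtain ⟨γ, hγV, hγB⟩ := hdense.inter_open_nonempty _ hopen
      ⟨.const I x, range_subset_iff.2 fun _ => hx⟩
    exact ⟨γ 0, hγV ⟨0, rfl⟩, hγB ⟨0, rfl⟩⟩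
  · intro x hx y hy
    obtain ⟨p, hp⟩ := hVp.joinedIn x hx.1 y hy.1
    have near_endpoint (t : I) (hz : p t ∈ V ∩ B) :
        ∀ᶠ γ : C(I, M) in 𝓝 ↑p, γ t ∈ pathComponentIn (V ∩ B) (p t) :=
      (((hV.inter hB).pathComponentIn _).preimage (continuous_eval_const t)).mem_nhds
        (mem_pathComponentIn_self hz)
    obtain ⟨γ, hγB, ⟨hγx, hγy⟩, hγV⟩ := hdense.inter_nhds_nonempty <| inter_mem
      (inter_mem (near_endpoint 0 (by rwa [p.source])) (near_endpoint 1 (by rwa [p.target])))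
      (hopen.mem_nhds (range_subset_iff.2 hp))
    rw [p.source] at hγx
    rw [p.target] at hγy
    have hγ : JoinedIn (V ∩ B) (γ 0) (γ 1) :=
      ⟨⟨γ, rfl, rfl⟩, fun t => ⟨hγV ⟨t, rfl⟩, hγB ⟨t, rfl⟩⟩⟩
    exact (JoinedIn.trans hγx hγ).trans (JoinedIn.symm hγy)

end PathConnected

section ModelMap

open Module

variable {n i : ℕ} {δu δs : ℝ}

/-- The diagonal entries of `modelMap n i δu δs`. -/
noncomputable def modelFactor (i : ℕ) (δu δs : ℝ) (j : ℕ) : ℝ :=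
  if j < i then (if j = 0 then 2 * δu else 2) else (if j = i then δs / 2 else 1 / 2)

theorem modelMap_apply (v : EuclideanSpace ℝ (Fin n)) (j : Fin n) :
    modelMap n i δu δs v j = modelFactor i δu δs j * v j :=
  (ite_mul ..).symm

theorem modelMap_iterate_apply (k : ℕ) (v : EuclideanSpace ℝ (Fin n)) (j : Fin n) :
    (modelMap n i δu δs)^[k] v j = modelFactor i δu δs j ^ k * v j := by
  induction k with
  | zero => rw [Function.iterate_zero_apply, pow_zero, one_mul]
  | succ k ih => rw [Function.iterate_succ_apply', modelMap_apply, ih, pow_succ', mul_assoc]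

theorem abs_modelFactor (hu : |δu| = 1) (hs : |δs| = 1) (j : ℕ) :
    |modelFactor i δu δs j| = if j < i then 2 else 1 / 2 := by
  unfold modelFactor
  split_ifs <;> simp [abs_mul, abs_div, hu, hs]

theorem modelFactor_ne_zero (hu : |δu| = 1) (hs : |δs| = 1) (j : ℕ) :
    modelFactor i δu δs j ≠ 0 := by
  rw [← abs_pos, abs_modelFactor hu hs]
  split_ifs <;> norm_num

theorem modelMap_surjective (hu : |δu| = 1) (hs : |δs| = 1) :
    Function.Surjective (modelMap n i δu δs) := by
  intro w
  refine ⟨WithLp.toLp 2 fun j => (modelFactor i δu δs j)⁻¹ * w j, ?_⟩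
  ext j
  rw [modelMap_apply, mul_inv_cancel_left₀ (modelFactor_ne_zero hu hs j)]

theorem tendsto_pow_mul_nhds_zero_iff {c x : ℝ} :
    Tendsto (fun k : ℕ => c ^ k * x) atTop (𝓝 0) ↔ |c| < 1 ∨ x = 0 := by
  rcases eq_or_ne x 0 with rfl | hx
  · simp
  · rw [← tendsto_pow_atTop_nhds_zero_iff, or_iff_left hx]
    exact ⟨fun h => by simpa [hx] using h.mul_const x⁻¹, fun h => by simpa using h.mul_const x⟩

theorem eq_zero_of_modelMap_eq (hu : |δu| = 1) (hs : |δs| = 1) {v : EuclideanSpace ℝ (Fin n)}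
    (hv : modelMap n i δu δs v = v) : v = 0 := by
  ext j
  have hj : modelFactor i δu δs j * v j = v j := by rw [← modelMap_apply, hv]
  refine (mul_left_eq_self₀.1 hj).resolve_left fun h => ?_
  have := abs_modelFactor (i := i) hu hs j
  rw [h, abs_one] at this
  split_ifs at this <;> norm_num at this

/-- The coordinates of `ℝⁿ` expanded by the model maps of Morse index `i`. -/
noncomputable def unstableCoords (n i : ℕ) :
    EuclideanSpace ℝ (Fin n) →L[ℝ] ({j : Fin n // (j : ℕ) < i} → ℝ) :=
  .pi fun j => EuclideanSpace.proj j.1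

theorem unstableCoords_surjective : Function.Surjective (unstableCoords n i) := by
  intro w
  refine ⟨WithLp.toLp 2 fun j => if h : (j : ℕ) < i then w ⟨j, h⟩ else 0, ?_⟩
  ext j
  exact dif_pos j.2

theorem finrank_unstableCoords (hi : i ≤ n) :
    finrank ℝ ({j : Fin n // (j : ℕ) < i} → ℝ) = i := by
  rw [finrank_fintype_fun_eq_card, Fintype.card_fin_lt_of_le hi]

theorem unstableCoords_eq_zero_iff {v : EuclideanSpace ℝ (Fin n)} :
    unstableCoords n i v = 0 ↔ ∀ j : Fin n, (j : ℕ) < i → v j = 0 :=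
  funext_iff.trans Subtype.forall

theorem tendsto_modelMap_iterate_iff (hu : |δu| = 1) (hs : |δs| = 1)
    {v : EuclideanSpace ℝ (Fin n)} :
    Tendsto (fun k => (modelMap n i δu δs)^[k] v) atTop (𝓝 0) ↔ unstableCoords n i v = 0 := by
  rw [(PiLp.homeomorph 2 _).isInducing.tendsto_nhds_iff, tendsto_pi_nhds,
    unstableCoords_eq_zero_iff]
  refine forall_congr' fun j => ?_
  change Tendsto (fun k => (modelMap n i δu δs)^[k] v j) atTop (𝓝 0) ↔ _
  simp only [modelMap_iterate_apply, tendsto_pow_mul_nhds_zero_iff, abs_modelFactor hu hs]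
  split_ifs with hj <;> norm_num [hj]

end ModelMap

section Iteration

open Function Set

variable {X Y : Type*} [TopologicalSpace X] [TopologicalSpace Y]

theorem tendsto_iterate_iff_of_semiconj {e : X → Y} (he : IsOpenEmbedding e) {a : X → X}
    {g : Y → Y} (hconj : Semiconj e a g) (ha : Surjective a) (hg : Injective g) {x₀ : X}
    {y : Y} :
    Tendsto (fun k => g^[k] y) atTop (𝓝 (e x₀)) ↔
      ∃ x, e x = y ∧ Tendsto (fun k => a^[k] x) atTop (𝓝 x₀) := by
  have iterate_eq (k : ℕ) (x : X) : e (a^[k] x) = g^[k] (e x) := hconj.iterate_right k x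
  constructor
  · intro h
    obtain ⟨k, v, hv⟩ := (h.eventually (he.isOpen_range.mem_nhds ⟨x₀, rfl⟩)).exists
    obtain ⟨x, rfl⟩ := ha.iterate k v
    obtain rfl : e x = y := hg.iterate k (by rw [← iterate_eq, hv])
    refine ⟨x, rfl, he.tendsto_nhds_iff.2 ?_⟩
    simpa only [comp_def, iterate_eq] using h
  · rintro ⟨x, rfl, hx⟩
    simpa only [comp_def, iterate_eq] using (he.continuous.tendsto x₀).comp hx

theorem tendsto_iterate_of_tendsto_iterate_iterate {g : X → X} {p x : X}
    (hg : ContinuousAt g p) (hp : g p = p) {d : ℕ} (hd : 0 < d)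
    (h : Tendsto (fun k => (g^[d])^[k] x) atTop (𝓝 p)) :
    Tendsto (fun k => g^[k] x) atTop (𝓝 p) := by
  have shifted (r : ℕ) : Tendsto (fun k => g^[r] ((g^[d])^[k] x)) atTop (𝓝 p) := by
    have := (hg.iterate hp r).tendsto.comp h
    rwa [iterate_fixed hp] at this
  intro W hW
  rw [mem_map]
  have eventually_mem : ∀ᶠ k in atTop, ∀ r ∈ Finset.range d, g^[r] ((g^[d])^[k] x) ∈ W :=
    (Finset.eventually_all _).2 fun r _ => shifted r hW
  filter_upwards [(Nat.tendsto_div_const_atTop hd.ne').eventually eventually_mem] with k hk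
  have := hk (k % d) (Finset.mem_range.2 (k.mod_lt hd))
  rwa [← iterate_mul, ← iterate_add_apply, k.mod_add_div] at this

theorem exists_isPeriodicPt_of_finite {α : Type*} {g : α → α} {S : Set α} (hS : S.Finite)
    (hper : S ⊆ periodicPts g) : ∃ N > 0, ∀ p ∈ S, IsPeriodicPt g N p := by
  refine ⟨∏ p ∈ hS.toFinset, minimalPeriod g p, Finset.prod_pos fun p hp => ?_, fun p hp => ?_⟩
  · exact minimalPeriod_pos_of_mem_periodicPts (hper (hS.mem_toFinset.1 hp))
  · exact (isPeriodicPt_minimalPeriod g p).trans_dvd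
      (Finset.dvd_prod_of_mem _ (hS.mem_toFinset.2 hp))

theorem exists_tendsto_iterate_of_finite [T2Space X] [CompactSpace X] {g : X → X}
    (hg : Continuous g) {S : Set X} (hS : S.Finite) (hfix : ∀ p ∈ S, g p = p) {x : X}
    (hcluster : ∀ y, MapClusterPt y atTop (fun k => g^[k] x) → y ∈ S) :
    ∃ p ∈ S, Tendsto (fun k => g^[k] x) atTop (𝓝 p) := by
  obtain ⟨U, hU, hdisj⟩ := hS.t2_separation
  have tendsto_S : Tendsto (fun k => g^[k] x) atTop (𝓝ˢ S) :=
    isCompact_univ.tendsto_nhdsSet_of_mapClusterPt (by simp) fun y _ => hcluster y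
  have hO : ⋃ p ∈ S, U p ∩ g ⁻¹' U p ∈ 𝓝ˢ S := by
    refine (isOpen_biUnion fun p _ =>
      (hU p).2.inter ((hU p).2.preimage hg)).mem_nhdsSet.2 fun p hp => mem_biUnion hp ⟨(hU p).1, ?_⟩
    rw [mem_preimage, hfix p hp]
    exact (hU p).1
  obtain ⟨k₀, hk₀⟩ := eventually_atTop.1 (tendsto_S.eventually hO)
  have unique {p q z : X} (hp : p ∈ S) (hq : q ∈ S) (hzp : z ∈ U p) (hzq : z ∈ U q) : q = p :=
    hdisj.elim_set hq hp z hzq hzp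
  obtain ⟨p, hp, hpk₀, -⟩ := mem_iUnion₂.1 (hk₀ k₀ le_rfl)
  have stays : ∀ k ≥ k₀, g^[k] x ∈ U p := by
    intro k hk
    induction k, hk using Nat.le_induction with
    | base => exact hpk₀
    | succ k hk ih =>
      obtain ⟨q, hq, hqk, hqk'⟩ := mem_iUnion₂.1 (hk₀ k hk)
      obtain rfl := unique hp hq ih hqk
      rwa [iterate_succ_apply']
  refine ⟨p, hp, tendsto_nhds_of_unique_mapClusterPt fun q hq => ?_⟩
  obtain ⟨k, hkq, hk⟩ := ((hq.frequently ((hU q).2.mem_nhds (hU q).1)).and_eventually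
    (eventually_ge_atTop k₀)).exists
  exact unique hp (hcluster q hq) (stays k hk) hkq

theorem iUnion_eq_of_isPreconnected {ι : Type*} {U : ι → Set X} (hU : ∀ i, IsOpen (U i))
    (hdisj : Pairwise (Disjoint on U)) (hconn : IsPreconnected (⋃ i, U i)) {i : ι}
    (hi : (U i).Nonempty) : ⋃ i, U i = U i := by
  have hcover : ⋃ i, U i ⊆ U i ∪ ⋃ (j) (_ : j ≠ i), U j := by
    refine iUnion_subset fun j => ?_
    rcases eq_or_ne j i with rfl | hj
    · exact subset_union_left
    · exact subset_union_of_subset_right (fun _ hx => mem_iUnion₂.2 ⟨j, hj, hx⟩) _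
  refine (hconn.subset_left_of_subset_union (hU i) (isOpen_biUnion fun j _ => hU j) ?_ hcover
    ?_).antisymm (subset_iUnion U i)
  · exact disjoint_iUnion₂_right.2 fun j hj => hdisj (Ne.symm hj)
  · rwa [inter_eq_right.2 (subset_iUnion U i)]

end Iteration

section Recurrence

open Function Set

theorem chainRecurrent_of_mapClusterPt {M : Type*} [PseudoMetricSpace M] {f : M → M} {x y : M}
    (hf : ContinuousAt f y) (h : MapClusterPt y atTop fun k => f^[k] x) :
    ChainRecurrent f y := by
  intro ε hε
  obtain ⟨δ, hδ, hδf⟩ := Metric.continuousAt_iff.1 hf ε hε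
  have returns := frequently_atTop.1 (h.frequently (Metric.ball_mem_nhds y (lt_min hδ hε)))
  obtain ⟨k, -, hk⟩ := returns 0
  obtain ⟨l, hkl, hl⟩ := returns (k + 2)
  have iterate_eq : f^[l - k - 1] (f (f^[k] x)) = f^[l] x := by
    rw [← iterate_succ_apply' f, ← iterate_add_apply]
    congr 2
    lia
  refine ⟨2, two_pos, ![y, f (f^[k] x), y], ![1, l - k - 1], rfl, rfl, ?_, ?_⟩
  · rw [Fin.forall_fin_two]
    exact ⟨le_rfl, show 1 ≤ l - k - 1 by lia⟩
  · rw [Fin.forall_fin_two]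
    constructor
    · change dist (f y) (f (f^[k] x)) < ε
      rw [dist_comm]
      exact hδf (hk.trans_le (min_le_left _ _))
    · change dist (f^[l - k - 1] (f (f^[k] x))) y < ε
      rw [iterate_eq]
      exact hl.trans_le (min_le_right _ _)

variable {M : Type*} [MetricSpace M] {n i : ℕ} {f : M ≃ₜ M} {p q x : M}

theorem TopHyperbolic.mem_periodicPts (h : TopHyperbolic n f p i) : p ∈ periodicPts f := by
  obtain ⟨m, hm, hp, -⟩ := h
  exact ⟨m, hm, hp⟩

theorem mem_stableSet_iff :
    x ∈ stableSet f p ↔ Tendsto (fun k => (f^[minimalPeriod f p])^[k] x) atTop (𝓝 p) := by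
  simp only [← iterate_mul, mul_comm (minimalPeriod f p)]
  rfl

theorem TopHyperbolic.exists_stableSet_eq_image (h : TopHyperbolic n f p i) :
    ∃ e : EuclideanSpace ℝ (Fin n) → M, IsOpenEmbedding e ∧
      stableSet f p = e '' (unstableCoords n i).ker := by
  obtain ⟨m, -, hper, hmin, δu, δs, hu, hs, U, hU, hpU, φ, hφ⟩ := h
  have hu' : |δu| = 1 := (abs_eq zero_le_one).2 hu
  have hs' : |δs| = 1 := (abs_eq zero_le_one).2 hs
  let e (v : EuclideanSpace ℝ (Fin n)) : M := φ.symm v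
  have he : IsOpenEmbedding e := hU.isOpenEmbedding_subtypeVal.comp φ.symm.isOpenEmbedding
  have hconj : Semiconj e (modelMap n i δu δs) f^[m] := fun v => by
    simp only [e, hφ, φ.apply_symm_apply]
  have hpe : e (φ ⟨p, hpU⟩) = p := by simp only [e, φ.symm_apply_apply]
  have hp0 : e 0 = p := by
    have : modelMap n i δu δs (φ ⟨p, hpU⟩) = φ ⟨p, hpU⟩ :=
      he.injective (by rw [hconj, hpe]; exact hper)
    rwa [eq_zero_of_modelMap_eq hu' hs' this] at hpe
  refine ⟨e, he, ?_⟩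
  ext x
  have := tendsto_iterate_iff_of_semiconj he hconj (modelMap_surjective hu' hs')
    (f.injective.iterate m) (x₀ := 0) (y := x)
  simp only [hp0, tendsto_modelMap_iterate_iff hu' hs'] at this
  simp only [mem_stableSet_iff, hmin, this, mem_image, SetLike.mem_coe, LinearMap.mem_ker,
    ContinuousLinearMap.coe_coe, and_comm]

theorem eq_of_mem_stableSet (hp : p ∈ periodicPts f) (hq : q ∈ periodicPts f)
    (hxp : x ∈ stableSet f p) (hxq : x ∈ stableSet f q) : p = q := by
  have hp' := hxp.comp (tendsto_id.atTop_mul_const' (minimalPeriod_pos_of_mem_periodicPts hq))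
  have hq' := hxq.comp (tendsto_id.atTop_mul_const' (minimalPeriod_pos_of_mem_periodicPts hp))
  refine tendsto_nhds_unique hp' (hq'.congr fun k => ?_)
  simp only [comp_apply, id, mul_right_comm]

theorem RegularHomeo.exists_mem_stableSet [CompactSpace M] (hf : RegularHomeo n f) (x : M) :
    ∃ p ∈ chainRecurrentSet f, x ∈ stableSet f p := by
  obtain ⟨hfin, hhyp⟩ := hf
  have hper : chainRecurrentSet f ⊆ periodicPts f := fun p hp => by
    obtain ⟨_, -, h⟩ := hhyp p hp
    exact h.mem_periodicPts
  obtain ⟨N, hN, hfix⟩ := exists_isPeriodicPt_of_finite hfin hper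
  obtain ⟨p, hp, hlim⟩ := exists_tendsto_iterate_of_finite (f.continuous.iterate N) hfin hfix
    (x := x) fun y hy => by
      simp only [← iterate_mul] at hy
      exact chainRecurrent_of_mapClusterPt f.continuous.continuousAt
        (hy.of_comp (φ := (N * ·)) (tendsto_id.const_mul_atTop' hN))
  obtain ⟨d, hd⟩ := (hfix p hp).minimalPeriod_dvd
  rw [hd, iterate_mul] at hlim
  exact ⟨p, hp, mem_stableSet_iff.2 <| tendsto_iterate_of_tendsto_iterate_iterate
    (f.continuous.iterate _).continuousAt (isPeriodicPt_minimalPeriod f p)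
    (Nat.pos_of_mul_pos_left (hd ▸ hN)) hlim⟩

end Recurrence

section Charts

open Set TopologicalSpace

variable {E M : Type*} [NormedAddCommGroup E] [NormedSpace ℝ E] [TopologicalSpace M]

theorem isSimplyConnected_image_of_convex {e : E → M} (he : IsEmbedding e) {s : Set E}
    (hs : Convex ℝ s) (hne : s.Nonempty) : IsSimplyConnected (e '' s) := by
  rw [he.isSimplyConnected_image]
  have := hs.contractibleSpace hne
  exact SimplyConnectedSpace.ofContractible s

theorem isTopologicalBasis_isSimplyConnected
    (hM : ∀ x : M, ∃ e : E → M, IsOpenEmbedding e ∧ x ∈ range e) :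
    IsTopologicalBasis {V : Set M | IsOpen V ∧ IsSimplyConnected V} := by
  refine isTopologicalBasis_of_isOpen_of_nhds (fun V hV => hV.1) fun x W hx hW => ?_
  obtain ⟨e, he, v, rfl⟩ := hM x
  obtain ⟨ε, hε, hball⟩ := Metric.isOpen_iff.1 (hW.preimage he.continuous) v hx
  have hv : v ∈ Metric.ball v ε := Metric.mem_ball_self hε
  exact ⟨e '' Metric.ball v ε, ⟨he.isOpenMap _ Metric.isOpen_ball,
    isSimplyConnected_image_of_convex he.isEmbedding (convex_ball v ε) ⟨v, hv⟩⟩,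
    mem_image_of_mem e hv, image_subset_iff.2 hball⟩

theorem locallyPathConnectedSpace_of_isTopologicalBasis {b : Set (Set M)}
    (hb : IsTopologicalBasis b) (hpath : ∀ V ∈ b, IsPathConnected V) :
    LocallyPathConnectedSpace M :=
  .of_bases (fun _ => hb.nhds_hasBasis) fun _ V hV => hpath V hV.1

end Charts

section SinkBasin

open Set TopologicalSpace
open scoped unitInterval

variable {M : Type*} [MetricSpace M] {n i : ℕ} {f : M ≃ₜ M} {p : M}

theorem RegularHomeo.exists_isOpenEmbedding [CompactSpace M] (hf : RegularHomeo n f) (x : M) :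
    ∃ e : EuclideanSpace ℝ (Fin n) → M, IsOpenEmbedding e ∧ x ∈ range e := by
  obtain ⟨p, hp, hx⟩ := hf.exists_mem_stableSet x
  obtain ⟨i, -, h⟩ := hf.2 p hp
  obtain ⟨e, he, hstable⟩ := h.exists_stableSet_eq_image
  have hpe : p ∈ range e := by
    have : p ∈ stableSet f p := mem_stableSet_iff.2 <| tendsto_const_nhds.congr fun k =>
      (Function.iterate_fixed (Function.isPeriodicPt_minimalPeriod f p) k).symm
    exact image_subset_range _ _ (hstable ▸ this)
  obtain ⟨k, v, hv⟩ := (hx.eventually (he.isOpen_range.mem_nhds hpe)).exists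
  generalize k * Function.minimalPeriod f p = l at hv
  refine ⟨(f ^ l).symm ∘ e, (f ^ l).symm.isOpenEmbedding.comp he, v, ?_⟩
  rw [Function.comp_apply, hv, Homeomorph.symm_apply_eq,
    hom_coe_pow (fun g : M ≃ₜ M => ⇑g) rfl (fun _ _ => rfl)]

theorem TopHyperbolic.eventually_residual_range_subset_compl_stableSet
    (h : TopHyperbolic n f p i) (hi : 2 ≤ i) (hin : i ≤ n) :
    ∀ᶠ γ : C(I, M) in residual _, range γ ⊆ (stableSet f p)ᶜ := by
  obtain ⟨e, he, hstable⟩ := h.exists_stableSet_eq_image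
  rw [hstable]
  exact eventually_residual_range_subset_compl_image_ker he unstableCoords_surjective
    (hi.trans_eq (finrank_unstableCoords hin).symm)

theorem TopHyperbolic.exists_stableSet_eq_range (h : TopHyperbolic n f p 0) :
    ∃ e : EuclideanSpace ℝ (Fin n) → M, IsOpenEmbedding e ∧ stableSet f p = range e := by
  obtain ⟨e, he, hstable⟩ := h.exists_stableSet_eq_image
  refine ⟨e, he, hstable.trans (image_univ ▸ congrArg (e '' ·) ?_)⟩
  exact eq_univ_of_forall fun v => unstableCoords_eq_zero_iff.2 fun j hj => absurd hj (by lia)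

theorem TopHyperbolic.isOpen_stableSet (h : TopHyperbolic n f p 0) : IsOpen (stableSet f p) := by
  obtain ⟨e, he, hstable⟩ := h.exists_stableSet_eq_range
  exact hstable ▸ he.isOpen_range

theorem TopHyperbolic.isSimplyConnected_stableSet (h : TopHyperbolic n f p 0) :
    IsSimplyConnected (stableSet f p) := by
  obtain ⟨e, he, hstable⟩ := h.exists_stableSet_eq_range
  rw [hstable, ← image_univ]
  exact isSimplyConnected_image_of_convex he.isEmbedding convex_univ univ_nonempty

/-- The union of the stable sets of the sinks of `f`. Sinks are periodic, so their chain recurrence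
need not be required. -/
def sinkBasin (n : ℕ) (f : M ≃ₜ M) : Set M :=
  ⋃ p : {p : M // TopHyperbolic n f p 0}, stableSet f p

theorem isOpen_sinkBasin : IsOpen (sinkBasin n f) :=
  isOpen_iUnion fun p => p.2.isOpen_stableSet

theorem isSimplyConnected_sinkBasin (h : IsConnected (sinkBasin n f)) :
    IsSimplyConnected (sinkBasin n f) := by
  obtain ⟨x, hx⟩ := h.nonempty
  obtain ⟨p, hp⟩ := mem_iUnion.1 hx
  have hdisj : Pairwise (Function.onFun Disjoint
      fun p : {p : M // TopHyperbolic n f p 0} => stableSet f p) := fun p q hpq =>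
    disjoint_left.2 fun y hyp hyq => hpq <| Subtype.ext <|
      eq_of_mem_stableSet p.2.mem_periodicPts q.2.mem_periodicPts hyp hyq
  have sinkBasin_eq : sinkBasin n f = stableSet f p :=
    iUnion_eq_of_isPreconnected (fun q => q.2.isOpen_stableSet) hdisj h.isPreconnected ⟨x, hp⟩
  exact sinkBasin_eq ▸ p.2.isSimplyConnected_stableSet

theorem RegularHomeo.dense_setOf_range_subset_sinkBasin [CompactSpace M] (hf : RegularHomeo n f)
    (hind : ∀ p ∈ chainRecurrentSet f, ¬ TopHyperbolic n f p 1) :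
    Dense {γ : C(I, M) | range γ ⊆ sinkBasin n f} := by
  have avoids : ∀ p ∈ chainRecurrentSet f, ∀ᶠ γ : C(I, M) in residual _,
      range γ ⊆ (stableSet f p \ sinkBasin n f)ᶜ := by
    intro p hp
    obtain ⟨i, hi, h⟩ := hf.2 p hp
    rcases i with _ | _ | i
    · refine .of_forall fun γ z _ hz => hz.2 (mem_iUnion.2 ⟨⟨p, h⟩, hz.1⟩)
    · exact absurd h (hind p hp)
    · filter_upwards [h.eventually_residual_range_subset_compl_stableSet (by lia) hi] with γ hγ
      exact hγ.trans (compl_subset_compl.2 sdiff_subset)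
  refine (dense_of_mem_residual
    ((eventually_countable_ball hf.1.countable).2 avoids)).mono fun γ hγ z hz => ?_
  obtain ⟨p, hp, hzp⟩ := hf.exists_mem_stableSet z
  by_contra hzB
  exact hγ p hp hz ⟨hzp, hzB⟩

end SinkBasin

theorem regular_no_codim_one_simply_connected_general {n : ℕ} {M : Type*} [MetricSpace M]
    [CompactSpace M] [ConnectedSpace M] (f : M ≃ₜ M) (hf : RegularHomeo n f)
    (hind : ∀ p ∈ chainRecurrentSet (⇑f), ¬ TopHyperbolic n f p 1) :
    SimplyConnectedSpace M := by
  have hbasis := isTopologicalBasis_isSimplyConnected hf.exists_isOpenEmbedding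
  have := locallyPathConnectedSpace_of_isTopologicalBasis hbasis fun _ hV => hV.2.isPathConnected
  have : PathConnectedSpace M := pathConnectedSpace_iff_connectedSpace.2 inferInstance
  have inter_sinkBasin {V : Set M} (hV : IsOpen V) (hVp : IsPathConnected V) :
      IsPathConnected (V ∩ sinkBasin n f) :=
    isPathConnected_inter_of_dense_setOf_range_subset isOpen_sinkBasin
      (hf.dense_setOf_range_subset_sinkBasin hind) hV hVp
  have sinkBasin_connected : IsConnected (sinkBasin n f) := by
    simpa only [Set.univ_inter] using
      (inter_sinkBasin isOpen_univ isPathConnected_univ).isConnected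
  exact simplyConnectedSpace_of_isTopologicalBasis_isAdapted
    (isSimplyConnected_sinkBasin sinkBasin_connected) <|
    hbasis.of_isOpen_of_subset (fun V hV => hV.isOpen) fun V ⟨hV, hVs⟩ =>
      ⟨hV, hVs, inter_sinkBasin hV hVs.isPathConnected⟩

/-- a closed connected topological `n`-manifold (`n ≥ 2`) admitting a
regular homeomorphism with no chain recurrent points of Morse index `1` or `n-1` is
simply connected. -/
theorem regular_no_codim_one_simply_connected {n : ℕ} (hn : 2 ≤ n) {M : Type*}
    [MetricSpace M] [CompactSpace M] [ConnectedSpace M] [Nonempty M]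
    (hM : IsChartedEuclidean n M)
    (f : M ≃ₜ M) (hf : RegularHomeo n f)
    (hind : ∀ p ∈ chainRecurrentSet (⇑f), ∀ i : ℕ,
      TopHyperbolic n f p i → i ≠ 1 ∧ i ≠ n - 1) :
    SimplyConnectedSpace M :=
  regular_no_codim_one_simply_connected_general f hf fun p hp h => (hind p hp 1 h).1 rfl
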